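/- Let H be a real Hilbert space, A : H → H' a self-adjoint bounded operator satisfying ⟨A x, y⟩ = ⟨A y, x⟩, and P : H' → H a self-adjoint positive definite operator (a Riesz-map preconditioner). Suppose that the norm ‖x‖_P² := ⟨P^{-1} x, x⟩ is equivalent to the norm in which A satisfies both boundedness |⟨A x, y⟩| ≤ C3 ‖x‖ ‖y‖ and the inf-sup condition inf_x sup_y ⟨Ax, y⟩/(‖x‖‖y‖) ≥ c > 0. Then the spectrum of the preconditioned operator P A is contained in [-C3/c', -c''] ∪ [c'', C3/c'] for constants c', c'' depending only on c, C3 and the norm-equivalence constants; in particular the spectral condition number of P A is bounded independently of any parameters entering only through the norm. -/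

import Mathlib

theorem aux_unit {H : Type} [NormedAddCommGroup H] [InnerProductSpace ℝ H] [CompleteSpace H]
    (P : (H →L[ℝ] ℝ) →L[ℝ] H) (Pinv : H →L[ℝ] (H →L[ℝ] ℝ)) (S : H →L[ℝ] H)
    (h1 : ∀ f : H →L[ℝ] ℝ, Pinv (P f) = f) (h2 : ∀ x : H, P (Pinv x) = x)
    (hsym : ∀ x y, Pinv x y = Pinv y x)
    (hnn : ∀ x, 0 ≤ Pinv x x)
    (hCS : ∀ x y, |Pinv x y| ≤ Real.sqrt (Pinv x x) * Real.sqrt (Pinv y y))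
    (hS : ∀ x y, Pinv (S x) y = Pinv (S y) x)
    (δ : ℝ) (hδ : 0 < δ)
    (hlow : ∀ x, δ * Real.sqrt (Pinv x x) ≤ Real.sqrt (Pinv (S x) (S x))) : IsUnit S := by
  have hup : ∀ x, Real.sqrt (Pinv x x) ≤ Real.sqrt ‖Pinv‖ * ‖x‖ := by
    intro x
    rw [Real.sqrt_le_left (by positivity), mul_pow, Real.sq_sqrt (norm_nonneg Pinv)]
    have := Pinv.le_opNorm₂ x x
    have h := le_abs_self (Pinv x x)
    rw [Real.norm_eq_abs] at this
    nlinarith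
  have hlo : ∀ x, ‖x‖ ≤ ‖P‖ * (Real.sqrt ‖Pinv‖ * Real.sqrt (Pinv x x)) := by
    intro x
    have hb : ‖Pinv x‖ ≤ Real.sqrt ‖Pinv‖ * Real.sqrt (Pinv x x) := by
      refine ContinuousLinearMap.opNorm_le_bound _ (by positivity) fun y => ?_
      rw [Real.norm_eq_abs]
      refine (hCS x y).trans ?_
      have := mul_le_mul_of_nonneg_left (hup y) (Real.sqrt_nonneg (Pinv x x))
      linarith
    calc ‖x‖ = ‖P (Pinv x)‖ := by rw [h2]
      _ ≤ ‖P‖ * ‖Pinv x‖ := P.le_opNorm _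
      _ ≤ _ := by gcongr
  have hbd : ∀ x, ‖x‖ ≤ (‖P‖ * Real.sqrt ‖Pinv‖ * (δ⁻¹ * Real.sqrt ‖Pinv‖)) * ‖S x‖ := by
    intro x
    have hx : Real.sqrt (Pinv x x) ≤ δ⁻¹ * (Real.sqrt ‖Pinv‖ * ‖S x‖) := by
      rw [le_inv_mul_iff₀ hδ]
      exact (hlow x).trans (hup _)
    calc ‖x‖ ≤ ‖P‖ * (Real.sqrt ‖Pinv‖ * Real.sqrt (Pinv x x)) := hlo x
      _ ≤ ‖P‖ * (Real.sqrt ‖Pinv‖ * (δ⁻¹ * (Real.sqrt ‖Pinv‖ * ‖S x‖))) := by gcongr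
      _ = _ := by ring
  have hK : 0 ≤ ‖P‖ * Real.sqrt ‖Pinv‖ * (δ⁻¹ * Real.sqrt ‖Pinv‖) := by positivity
  have hanti : AntilipschitzWith ⟨_, hK⟩ S := S.antilipschitz_of_bound hbd
  have hcl : IsClosed (Set.range S) := hanti.isClosed_range S.uniformContinuous
  have hzero : ∀ z, S z = 0 → z = 0 := fun z hz => by
    have := hbd z
    rw [hz] at this
    simpa using this
  rw [ContinuousLinearMap.isUnit_iff_bijective]
  refine ⟨hanti.injective, ?_⟩
  have horth : (LinearMap.range (S : H →ₗ[ℝ] H))ᗮ = ⊥ := by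
    rw [Submodule.eq_bot_iff]
    intro v hv
    have hv' : ∀ x, inner ℝ v (S x) = 0 := fun x =>
      Submodule.inner_left_of_mem_orthogonal (K := LinearMap.range (S : H →ₗ[ℝ] H)) ⟨x, rfl⟩ hv
    set z := P (innerSL ℝ v) with hz
    have hPz : Pinv z = innerSL ℝ v := h1 _
    have hSz : Pinv (S z) = 0 := by
      ext x
      rw [hS z x, hsym, hPz]
      simpa using hv' x
    have hz0 : z = 0 := hzero z (by rw [← h2 (S z), hSz, map_zero])
    have : innerSL ℝ v = 0 := by rw [← hPz, hz0, map_zero]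
    have h := congrArg (fun f => f v) this
    simpa using h
  have htop := (Submodule.topologicalClosure_eq_top_iff (K := LinearMap.range (S : H →ₗ[ℝ] H))).2 horth
  have hc' : IsClosed ((LinearMap.range (S : H →ₗ[ℝ] H)) : Set H) := by
    rw [LinearMap.coe_range]
    exact hcl
  rw [hc'.submodule_topologicalClosure_eq] at htop
  exact LinearMap.range_eq_top.1 htop

/-- Operator-preconditioning principle (Mardal–Winther framework, Section 6):
if `A` is self-adjoint and satisfies boundedness and an inf-sup condition in a
norm `n` equivalent to the norm `‖x‖_P = √(⟨P⁻¹x, x⟩)` induced by a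
self-adjoint positive-definite Riesz-map preconditioner `P`, then the spectrum
of the preconditioned operator `P ∘ A` is contained in
`[-C3/c', -c''] ∪ [c'', C3/c']` with constants depending only on the inf-sup
constant, the continuity constant, and the norm-equivalence constants. -/
theorem stmt_12 (c C3 k1 k2 : ℝ) (hc : 0 < c) (hC3 : 0 < C3)
    (hk1 : 0 < k1) (hk2 : 0 < k2) :
    ∃ c' > 0, ∃ c'' > 0,
      ∀ (H : Type) [instH : NormedAddCommGroup H] [instH2 : InnerProductSpace ℝ H]
        [instH3 : CompleteSpace H],
      ∀ (A : H →L[ℝ] (H →L[ℝ] ℝ)) (P : (H →L[ℝ] ℝ) →L[ℝ] H)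
        (Pinv : H →L[ℝ] (H →L[ℝ] ℝ)) (n : H → ℝ),
        (∀ x y : H, A x y = A y x) →
        (∀ f g : H →L[ℝ] ℝ, f (P g) = g (P f)) →
        (∀ f : H →L[ℝ] ℝ, f ≠ 0 → 0 < f (P f)) →
        (∀ f : H →L[ℝ] ℝ, Pinv (P f) = f) →
        (∀ x : H, P (Pinv x) = x) →
        (∀ x y : H, |A x y| ≤ C3 * n x * n y) →
        (∀ x : H, ∃ y : H, n y ≤ 1 ∧ A x y ≥ c * n x) →
        (∀ x : H, k1 * Real.sqrt (Pinv x x) ≤ n x ∧ n x ≤ k2 * Real.sqrt (Pinv x x)) →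
        spectrum ℝ (P.comp A) ⊆
          Set.Icc (-(C3 / c')) (-c'') ∪ Set.Icc c'' (C3 / c') := by
  refine ⟨(k2 ^ 2)⁻¹, by positivity, c * k1 ^ 2, by positivity, ?_⟩
  intro H _ _ _ A P Pinv n hA hP hpos h1 h2 hbd hinf hn l hl
  have hsym : ∀ x y, Pinv x y = Pinv y x := fun x y => by
    have := hP (Pinv x) (Pinv y)
    rwa [h2, h2] at this
  have hnn : ∀ x, 0 ≤ Pinv x x := fun x => by
    by_cases h : Pinv x = 0
    · simp [h]
    · have := hpos _ h
      rw [h2] at this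
      exact this.le
  have hCS : ∀ x y, |Pinv x y| ≤ Real.sqrt (Pinv x x) * Real.sqrt (Pinv y y) := by
    intro x y
    rw [← Real.sqrt_mul (hnn x)]
    apply Real.abs_le_sqrt
    have hq : ∀ t : ℝ, 0 ≤ Pinv y y * (t * t) + (2 * Pinv x y) * t + Pinv x x := fun t => by
      have := hnn (x + t • y)
      simp only [map_add, map_smul, ContinuousLinearMap.add_apply,
        ContinuousLinearMap.smul_apply, smul_eq_mul, hsym y x] at this
      linarith
    have := discrim_le_zero hq
    rw [discrim] at this
    linarith
  have hl' : ¬ IsUnit (algebraMap ℝ (H →L[ℝ] H) l - P.comp A) := hl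
  have hSv : ∀ x y, Pinv ((algebraMap ℝ (H →L[ℝ] H) l - P.comp A) x) y
      = l * Pinv x y - A x y := fun x y => by
    simp [Algebra.algebraMap_eq_smul_one, h1]
  have key : ∀ δ : ℝ, 0 < δ → (∀ x, δ * Real.sqrt (Pinv x x) ≤ Real.sqrt
      (Pinv ((algebraMap ℝ (H →L[ℝ] H) l - P.comp A) x)
        ((algebraMap ℝ (H →L[ℝ] H) l - P.comp A) x))) → False := fun δ hδ h =>
    hl' (aux_unit P Pinv _ h1 h2 hsym hnn hCS
      (fun x y => by rw [hSv, hSv, hsym x y, hA x y]) δ hδ h)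
  have hlow : c * k1 ^ 2 ≤ |l| := by
    by_contra! hlt
    refine key (c * k1 ^ 2 - |l|) (by linarith) fun x => ?_
    obtain ⟨y, hy1, hy2⟩ := hinf x
    have hC := hCS ((algebraMap ℝ (H →L[ℝ] H) l - P.comp A) x) y
    have hC2 := hCS x y
    rw [hSv] at hC
    set N := Real.sqrt (Pinv ((algebraMap ℝ (H →L[ℝ] H) l - P.comp A) x)
        ((algebraMap ℝ (H →L[ℝ] H) l - P.comp A) x))
    have hN : 0 ≤ N := Real.sqrt_nonneg _
    set X := Real.sqrt (Pinv x x)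
    have hX : 0 ≤ X := Real.sqrt_nonneg _
    set Y := Real.sqrt (Pinv y y)
    have hY : k1 * Y ≤ 1 := (hn y).1.trans hy1
    have e1 : c * (k1 * X) ≤ A x y := (mul_le_mul_of_nonneg_left (hn x).1 hc.le).trans hy2
    have e2 : l * Pinv x y ≤ |l| * (X * Y) :=
      (le_abs_self _).trans (by rw [abs_mul]; gcongr)
    have e3 : A x y - l * Pinv x y ≤ N * Y := by
      have := neg_abs_le (l * Pinv x y - A x y)
      linarith
    have e4 : c * (k1 * X) ≤ N * Y + |l| * (X * Y) := by linarith
    have e5 : k1 * (c * (k1 * X)) ≤ k1 * (N * Y + |l| * (X * Y)) := by gcongr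
    have e6 : (N + |l| * X) * (k1 * Y) ≤ (N + |l| * X) * 1 := by gcongr
    linarith
  have hhigh : |l| ≤ C3 * k2 ^ 2 := by
    by_contra! hlt
    refine key (|l| - C3 * k2 ^ 2) (by linarith) fun x => ?_
    have hC := hCS ((algebraMap ℝ (H →L[ℝ] H) l - P.comp A) x) x
    have hB := hbd x x
    have hsq := Real.sq_sqrt (hnn x)
    have hn1 := hn x
    have hnx := hnn x
    rw [hSv] at hC
    set N := Real.sqrt (Pinv ((algebraMap ℝ (H →L[ℝ] H) l - P.comp A) x)
        ((algebraMap ℝ (H →L[ℝ] H) l - P.comp A) x))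
    have hN : 0 ≤ N := Real.sqrt_nonneg _
    set X := Real.sqrt (Pinv x x)
    have hX : 0 ≤ X := Real.sqrt_nonneg _
    rcases hX.eq_or_lt with h0 | h0
    · rw [← h0]; simpa using hN
    have hn0 : 0 ≤ n x := le_trans (by positivity) hn1.1
    have e1 : C3 * n x * n x ≤ C3 * (k2 * X) * (k2 * X) := by
      have := hn1.2
      gcongr
    have e2 : |l| * X ^ 2 = |l * Pinv x x| := by rw [abs_mul, abs_of_nonneg hnx, hsq]
    have e3 := abs_sub_abs_le_abs_sub (l * Pinv x x) (A x x)
    have e4 : ((|l| - C3 * k2 ^ 2) * X) * X ≤ N * X := by linarith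
    exact le_of_mul_le_mul_right e4 h0
  have hdiv : C3 / (k2 ^ 2)⁻¹ = C3 * k2 ^ 2 := by rw [div_inv_eq_mul]
  rw [hdiv]
  have hb := abs_le.1 hhigh
  rcases le_abs'.1 hlow with h | h
  · exact Or.inl ⟨hb.1, h⟩
  · exact Or.inr ⟨h, hb.2⟩
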